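/- Let X_1, X_2, … be identically distributed random variables in a sub-linear expectation space whose upper capacity 𝕍 is continuous, and suppose they are extended negatively dependent under the conjugate expectation ℰ (i.e., ℰ[∏_{i=1}^n g_i(X_i)] ≤ K·∏_{i=1}^n ℰ[g_i(X_i)] for some K ≥ 1, every n, and all non-negative bounded Lipschitz g_i that are either all non-decreasing or all non-increasing). Set S_n = Σ_{k=1}^n X_k. If 𝕍( limsup_{n→∞} |S_n|/n = +∞ ) < 1, then C_𝕍(|X_1|) < ∞. -/

import Mathlib

open Filter MeasureTheory
open scoped ENNReal NNReal

noncomputable section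

/-- A sub-linear expectation on `Ω`: a monotone, constant-preserving, sub-additive,
positively homogeneous functional on real random variables (with values in the
extended reals, so that random variables without a finite expectation are allowed). -/
structure SublinearExp (Ω : Type) where
  E : (Ω → ℝ) → EReal
  mono : ∀ X Y : Ω → ℝ, (∀ ω, X ω ≤ Y ω) → E X ≤ E Y
  const_eq : ∀ c : ℝ, E (fun _ => c) = (c : EReal)
  subadd : ∀ X Y : Ω → ℝ, E (fun ω => X ω + Y ω) ≤ E X + E Y
  pos_homog : ∀ lam : ℝ, 0 ≤ lam → ∀ X : Ω → ℝ,
    E (fun ω => lam * X ω) = (lam : EReal) * E X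

namespace SublinearExp

variable {Ω : Type}

/-- The conjugate expectation `ℰ[X] := −𝔼[−X]`. -/
def cE (SL : SublinearExp Ω) (X : Ω → ℝ) : EReal := - SL.E fun ω => - X ω

/-- The upper capacity `𝕍(A) := inf{𝔼[ξ] : 1_A ≤ ξ}`. -/
def V (SL : SublinearExp Ω) (A : Set Ω) : ℝ :=
  sInf {x : ℝ | ∃ ξ : Ω → ℝ,
    (∀ ω, A.indicator (fun _ => (1 : ℝ)) ω ≤ ξ ω) ∧ SL.E ξ = (x : EReal)}

/-- The lower capacity `𝓋(A) := 1 − 𝕍(Aᶜ)`. -/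
def vLow (SL : SublinearExp Ω) (A : Set Ω) : ℝ := 1 - SL.V Aᶜ

/-- The Choquet integral `C_𝕍(X) := ∫₀^∞ 𝕍(X ≥ t) dt` (of a non-negative r.v.). -/
def Choquet (SL : SublinearExp Ω) (X : Ω → ℝ) : ℝ≥0∞ :=
  ∫⁻ t in Set.Ioi (0 : ℝ), ENNReal.ofReal (SL.V {ω | t ≤ X ω})

/-- The outer capacity `𝕍*(A) := inf{Σ_n 𝕍(A_n) : A ⊆ ∪_n A_n}`. -/
def Vout (SL : SublinearExp Ω) (A : Set Ω) : ℝ≥0∞ :=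
  ⨅ (B : ℕ → Set Ω) (_ : A ⊆ ⋃ n, B n), ∑' n, ENNReal.ofReal (SL.V (B n))

/-- The upper capacity is continuous: continuous from below and from above. -/
def ContinuousCapacity (SL : SublinearExp Ω) : Prop :=
  (∀ A : ℕ → Set Ω, Monotone A →
    Tendsto (fun n => SL.V (A n)) atTop (nhds (SL.V (⋃ n, A n)))) ∧
  (∀ A : ℕ → Set Ω, Antitone A →
    Tendsto (fun n => SL.V (A n)) atTop (nhds (SL.V (⋂ n, A n))))

/-- Bounded Lipschitz function on ℝ. -/
def IsBLip (g : ℝ → ℝ) : Prop :=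
  (∃ L : NNReal, LipschitzWith L g) ∧ ∃ M : ℝ, ∀ x, |g x| ≤ M

/-- Local Lipschitz function on ℝ: `|φ(x) − φ(y)| ≤ C(1+|x|^m+|y|^m)|x−y|`. -/
def IsLocLip (φ : ℝ → ℝ) : Prop :=
  ∃ (C : ℝ) (m : ℕ), ∀ x y : ℝ, |φ x - φ y| ≤ C * (1 + |x| ^ m + |y| ^ m) * |x - y|

/-- Upper extended negative dependence (finite family) with dominating constant `K`:
`𝔼[∏ g_i(X_i)] ≤ K ∏ 𝔼[g_i(X_i)]` for all non-negative bounded Lipschitz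
non-decreasing `g_i`.  (Expectations of bounded functions are finite, whence
the `toReal`.) -/
def UENDFin (SL : SublinearExp Ω) (K : ℝ) {n : ℕ} (X : Fin n → Ω → ℝ) : Prop :=
  ∀ g : Fin n → ℝ → ℝ, (∀ i, IsBLip (g i)) → (∀ i, Monotone (g i)) →
    (∀ i x, 0 ≤ g i x) →
    SL.E (fun ω => ∏ i, g i (X i ω)) ≤
      ((K * ∏ i, (SL.E fun ω => g i (X i ω)).toReal : ℝ) : EReal)

/-- Upper extended negative dependence for a sequence. -/
def UEND (SL : SublinearExp Ω) (K : ℝ) (X : ℕ → Ω → ℝ) : Prop :=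
  ∀ n : ℕ, ∀ g : ℕ → ℝ → ℝ, (∀ i, IsBLip (g i)) → (∀ i, Monotone (g i)) →
    (∀ i x, 0 ≤ g i x) →
    SL.E (fun ω => ∏ i ∈ Finset.range n, g i (X i ω)) ≤
      ((K * ∏ i ∈ Finset.range n, (SL.E fun ω => g i (X i ω)).toReal : ℝ) : EReal)

/-- Lower extended negative dependence for a sequence. -/
def LEND (SL : SublinearExp Ω) (K : ℝ) (X : ℕ → Ω → ℝ) : Prop :=
  ∀ n : ℕ, ∀ g : ℕ → ℝ → ℝ, (∀ i, IsBLip (g i)) → (∀ i, Antitone (g i)) →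
    (∀ i x, 0 ≤ g i x) →
    SL.E (fun ω => ∏ i ∈ Finset.range n, g i (X i ω)) ≤
      ((K * ∏ i ∈ Finset.range n, (SL.E fun ω => g i (X i ω)).toReal : ℝ) : EReal)

/-- Extended negative dependence = upper and lower END. -/
def END (SL : SublinearExp Ω) (K : ℝ) (X : ℕ → Ω → ℝ) : Prop :=
  UEND SL K X ∧ LEND SL K X

/-- Upper extended negative dependence under the conjugate expectation `ℰ`
(finite family). -/
def UENDFinConj (SL : SublinearExp Ω) (K : ℝ) {n : ℕ} (X : Fin n → Ω → ℝ) : Prop :=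
  ∀ g : Fin n → ℝ → ℝ, (∀ i, IsBLip (g i)) → (∀ i, Monotone (g i)) →
    (∀ i x, 0 ≤ g i x) →
    SL.cE (fun ω => ∏ i, g i (X i ω)) ≤
      ((K * ∏ i, (SL.cE fun ω => g i (X i ω)).toReal : ℝ) : EReal)

/-- Upper extended negative dependence under the conjugate expectation (sequence). -/
def UENDconj (SL : SublinearExp Ω) (K : ℝ) (X : ℕ → Ω → ℝ) : Prop :=
  ∀ n : ℕ, ∀ g : ℕ → ℝ → ℝ, (∀ i, IsBLip (g i)) → (∀ i, Monotone (g i)) →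
    (∀ i x, 0 ≤ g i x) →
    SL.cE (fun ω => ∏ i ∈ Finset.range n, g i (X i ω)) ≤
      ((K * ∏ i ∈ Finset.range n, (SL.cE fun ω => g i (X i ω)).toReal : ℝ) : EReal)

/-- Lower extended negative dependence under the conjugate expectation (sequence). -/
def LENDconj (SL : SublinearExp Ω) (K : ℝ) (X : ℕ → Ω → ℝ) : Prop :=
  ∀ n : ℕ, ∀ g : ℕ → ℝ → ℝ, (∀ i, IsBLip (g i)) → (∀ i, Antitone (g i)) →
    (∀ i x, 0 ≤ g i x) →
    SL.cE (fun ω => ∏ i ∈ Finset.range n, g i (X i ω)) ≤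
      ((K * ∏ i ∈ Finset.range n, (SL.cE fun ω => g i (X i ω)).toReal : ℝ) : EReal)

/-- Extended negative dependence under the conjugate expectation. -/
def ENDconj (SL : SublinearExp Ω) (K : ℝ) (X : ℕ → Ω → ℝ) : Prop :=
  UENDconj SL K X ∧ LENDconj SL K X

/-- Extended independence of a sequence:
`𝔼[∏ ψ_i(X_i)] = ∏ 𝔼[ψ_i(X_i)]` for non-negative local Lipschitz `ψ_i`,
whenever the expectations involved are finite. -/
def ExtIndep (SL : SublinearExp Ω) (X : ℕ → Ω → ℝ) : Prop :=
  ∀ n : ℕ, ∀ ψ : ℕ → ℝ → ℝ, (∀ i, IsLocLip (ψ i)) → (∀ i x, 0 ≤ ψ i x) →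
    (∀ i ∈ Finset.range n, SL.E (fun ω => ψ i (X i ω)) ≠ ⊤) →
    SL.E (fun ω => ∏ i ∈ Finset.range n, ψ i (X i ω)) =
      ((∏ i ∈ Finset.range n, (SL.E fun ω => ψ i (X i ω)).toReal : ℝ) : EReal)

/-- Extended independence of two random variables. -/
def ExtIndepPair (SL : SublinearExp Ω) (Y Z : Ω → ℝ) : Prop :=
  ∀ ψ₁ ψ₂ : ℝ → ℝ, IsLocLip ψ₁ → IsLocLip ψ₂ →
    (∀ x, 0 ≤ ψ₁ x) → (∀ x, 0 ≤ ψ₂ x) →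
    SL.E (fun ω => ψ₁ (Y ω)) ≠ ⊤ → SL.E (fun ω => ψ₂ (Z ω)) ≠ ⊤ →
    SL.E (fun ω => ψ₁ (Y ω) * ψ₂ (Z ω)) =
      (((SL.E fun ω => ψ₁ (Y ω)).toReal * (SL.E fun ω => ψ₂ (Z ω)).toReal : ℝ) : EReal)

/-- Identically distributed: `𝔼[φ(X_i)] = 𝔼[φ(X_1)]` for all local Lipschitz `φ`. -/
def IdentDist (SL : SublinearExp Ω) (X : ℕ → Ω → ℝ) : Prop :=
  ∀ (i : ℕ) (φ : ℝ → ℝ), IsLocLip φ →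
    SL.E (fun ω => φ (X i ω)) = SL.E fun ω => φ (X 0 ω)

end SublinearExp

/-- `log x = ln(x ∨ e)`. -/
def paperLog (x : ℝ) : ℝ := Real.log (max x (Real.exp 1))

/-- `a_n = √(2 n log log n)` with the above convention for `log`. -/
def lilA (n : ℕ) : ℝ := Real.sqrt (2 * n * paperLog (paperLog n))

namespace SublinearExp

variable {Ω : Type}

lemma coe_toReal_E (SL : SublinearExp Ω) {X : Ω → ℝ} {a b : ℝ} (ha : ∀ ω, a ≤ X ω)
    (hb : ∀ ω, X ω ≤ b) : ((SL.E X).toReal : EReal) = SL.E X := by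
  have h1 := SL.mono (fun _ => a) X ha
  have h2 := SL.mono X (fun _ => b) hb
  rw [SL.const_eq] at h1 h2
  exact EReal.coe_toReal (ne_top_of_le_ne_top (EReal.coe_ne_top b) h2)
    (ne_bot_of_le_ne_bot (EReal.coe_ne_bot a) h1)

lemma coe_V (SL : SublinearExp Ω) (A : Set Ω) :
    (SL.V A : EReal) = SL.E (A.indicator fun _ => 1) := by
  have hE := SL.coe_toReal_E (X := A.indicator fun _ => (1 : ℝ)) (a := 0) (b := 1)
    (fun ω => Set.indicator_nonneg (fun _ _ => zero_le_one) ω)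
    (fun ω => Set.indicator_le_self' (fun _ _ => zero_le_one) ω)
  rw [← hE]
  congr 1
  refine IsLeast.csInf_eq ⟨⟨_, fun _ => le_rfl, hE.symm⟩, ?_⟩
  rintro x ⟨ξ, hξ, hx⟩
  rw [← EReal.coe_le_coe_iff, hE, ← hx]
  exact SL.mono _ _ hξ

lemma V_mono (SL : SublinearExp Ω) {A B : Set Ω} (h : A ⊆ B) : SL.V A ≤ SL.V B := by
  rw [← EReal.coe_le_coe_iff, coe_V, coe_V]
  exact SL.mono _ _ fun ω => Set.indicator_le_indicator_of_subset h (fun _ => zero_le_one) ω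

lemma V_nonneg (SL : SublinearExp Ω) (A : Set Ω) : 0 ≤ SL.V A := by
  rw [← EReal.coe_le_coe_iff, coe_V, ← SL.const_eq]
  exact SL.mono _ _ fun ω => Set.indicator_nonneg (fun _ _ => zero_le_one) ω

lemma V_le_one (SL : SublinearExp Ω) (A : Set Ω) : SL.V A ≤ 1 := by
  rw [← EReal.coe_le_coe_iff, coe_V, ← SL.const_eq]
  exact SL.mono _ _ fun ω => Set.indicator_le_self' (fun _ _ => zero_le_one) ω

lemma V_union_le (SL : SublinearExp Ω) (A B : Set Ω) : SL.V (A ∪ B) ≤ SL.V A + SL.V B := by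
  rw [← EReal.coe_le_coe_iff, EReal.coe_add, coe_V, coe_V, coe_V]
  refine le_trans (SL.mono _ _ fun ω => ?_) (SL.subadd _ _)
  by_cases hA : ω ∈ A <;> by_cases hB : ω ∈ B <;> simp [hA, hB]

lemma one_sub_V_le_cE (SL : SublinearExp Ω) {U : Set Ω} {Y : Ω → ℝ} (h0 : ∀ ω, 0 ≤ Y ω)
    (h1 : ∀ ω, ω ∉ U → 1 ≤ Y ω) : ((1 - SL.V U : ℝ) : EReal) ≤ SL.cE Y := by
  have h : SL.E (fun ω => - Y ω) ≤ ((SL.V U + -1 : ℝ) : EReal) := by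
    rw [EReal.coe_add, coe_V, ← SL.const_eq (-1)]
    refine le_trans (SL.mono _ _ fun ω => ?_) (SL.subadd _ _)
    by_cases hU : ω ∈ U
    · simpa [hU] using h0 ω
    · simpa [hU] using h1 ω hU
  have h' := EReal.neg_le_neg_iff.2 h
  rw [← EReal.coe_neg] at h'
  rwa [cE, show 1 - SL.V U = -(SL.V U + -1) by ring]

lemma cE_le_one_sub_V (SL : SublinearExp Ω) {U : Set Ω} {Y : Ω → ℝ} (h0 : ∀ ω, Y ω ≤ 1)
    (h1 : ∀ ω ∈ U, Y ω ≤ 0) : SL.cE Y ≤ ((1 - SL.V U : ℝ) : EReal) := by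
  by_cases htop : SL.E (fun ω => - Y ω) = ⊤
  · simp [cE, htop]
  have hbot : SL.E (fun ω => - Y ω) ≠ ⊥ := by
    have := SL.mono (fun _ => -1) (fun ω => - Y ω) fun ω => by linarith [h0 ω]
    rw [SL.const_eq] at this
    exact ne_bot_of_le_ne_bot (EReal.coe_ne_bot _) this
  have h : (SL.V U : EReal) ≤ SL.E (fun ω => - Y ω) + ((1 : ℝ) : EReal) := by
    rw [coe_V, ← SL.const_eq 1]
    refine le_trans (SL.mono _ _ fun ω => ?_) (SL.subadd _ _)
    by_cases hU : ω ∈ U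
    · simpa [hU] using h1 ω hU
    · simpa [hU] using h0 ω
  rw [cE]
  lift SL.E (fun ω => - Y ω) to ℝ using ⟨htop, hbot⟩ with r
  norm_cast at h ⊢
  linarith

lemma cE_nonneg (SL : SublinearExp Ω) {Y : Ω → ℝ} (h0 : ∀ ω, 0 ≤ Y ω) : 0 ≤ SL.cE Y := by
  have := SL.mono (fun ω => - Y ω) (fun _ => 0) fun ω => by simpa using h0 ω
  rw [SL.const_eq] at this
  simpa [cE] using EReal.neg_le_neg_iff.2 this

lemma isLocLip_of_lipschitzWith {φ : ℝ → ℝ} {L : ℝ≥0} (h : LipschitzWith L φ) : IsLocLip φ := by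
  refine ⟨L, 0, fun x y => ?_⟩
  have h1 := h.dist_le_mul x y
  rw [Real.dist_eq, Real.dist_eq] at h1
  have h2 : 0 ≤ (L : ℝ) * |x - y| := by positivity
  norm_num
  nlinarith

/-- A Lipschitz non-increasing cut-off: `1` below `t`, `0` above `2 * t`. -/
def cutoff (t x : ℝ) : ℝ := max 0 (min 1 (2 - t⁻¹ * x))

lemma lipschitzWith_cutoff (t : ℝ) : LipschitzWith ‖t⁻¹‖₊ (cutoff t) := by
  have h1 : LipschitzWith ‖t⁻¹‖₊ (fun x : ℝ => 2 - t⁻¹ * x) := by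
    refine LipschitzWith.of_dist_le_mul fun x y => ?_
    rw [Real.dist_eq, Real.dist_eq, show 2 - t⁻¹ * x - (2 - t⁻¹ * y) = -(t⁻¹ * (x - y)) by ring,
      abs_neg, abs_mul]
    simp
  exact (h1.const_min 1).const_max 0

lemma cutoff_nonneg (t x : ℝ) : 0 ≤ cutoff t x := le_max_left _ _

lemma cutoff_le_one (t x : ℝ) : cutoff t x ≤ 1 := max_le zero_le_one (min_le_left _ _)

lemma antitone_cutoff {t : ℝ} (ht : 0 < t) : Antitone (cutoff t) := fun x y hxy => by
  unfold cutoff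
  gcongr

lemma one_le_cutoff {t x : ℝ} (ht : 0 < t) (hx : x < t) : 1 ≤ cutoff t x := by
  refine le_max_of_le_right (le_min le_rfl ?_)
  have : t⁻¹ * x ≤ t⁻¹ * t := by gcongr
  rw [inv_mul_cancel₀ ht.ne'] at this
  linarith

lemma cutoff_le_zero {t x : ℝ} (ht : 0 < t) (hx : 2 * t ≤ x) : cutoff t x ≤ 0 := by
  refine max_le le_rfl ((min_le_right _ _).trans ?_)
  have : t⁻¹ * (2 * t) ≤ t⁻¹ * x := by gcongr
  rw [mul_left_comm, inv_mul_cancel₀ ht.ne'] at this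
  linarith

lemma cE_cutoff_le (SL : SublinearExp Ω) {Y : ℕ → Ω → ℝ} (hid : IdentDist SL Y) (i : ℕ) {t : ℝ}
    (ht : 0 < t) :
    SL.cE (fun ω => cutoff t (Y i ω)) ≤ ((1 - SL.V {ω | 2 * t ≤ Y 0 ω} : ℝ) : EReal) := by
  have h : SL.cE (fun ω => cutoff t (Y i ω)) = SL.cE (fun ω => cutoff t (Y 0 ω)) :=
    congrArg Neg.neg (hid i (fun x => - cutoff t x)
      (isLocLip_of_lipschitzWith (lipschitzWith_cutoff t).neg))
  rw [h]
  exact SL.cE_le_one_sub_V (fun _ => cutoff_le_one _ _) fun ω hω => cutoff_le_zero ht hω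

/-- A Borel–Cantelli bound: divergent upper tails force the tail unions to have full capacity. -/
lemma V_iUnion_tail_eq_one (SL : SublinearExp Ω) {Y : ℕ → Ω → ℝ} {K : ℝ} (hK : 1 ≤ K)
    (hid : IdentDist SL Y) (hL : LENDconj SL K Y) {t : ℕ → ℝ} (ht : ∀ i, 0 < t i)
    (hsum : ¬ Summable fun i => SL.V {ω | 2 * t i ≤ Y 0 ω}) (n : ℕ) :
    SL.V (⋃ i ≥ n, {ω | t i ≤ Y i ω}) = 1 := by
  refine le_antisymm (SL.V_le_one _) ?_
  set U := ⋃ i ≥ n, {ω | t i ≤ Y i ω} with hU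
  set p : ℕ → ℝ := fun i => if i < n then 0 else SL.V {ω | 2 * t i ≤ Y 0 ω} with hp
  have hp0 : ∀ i, 0 ≤ p i := fun i => by
    simp only [hp]
    split_ifs
    exacts [le_rfl, SL.V_nonneg _]
  have hpsum : ¬ Summable p := by
    rw [← summable_nat_add_iff n] at hsum ⊢
    simpa [hp] using hsum
  let g : ℕ → ℝ → ℝ := fun i => if i < n then fun _ => 1 else cutoff (t i)
  have hg0 : ∀ i x, 0 ≤ g i x := fun i x => by
    simp only [g]
    split_ifs
    exacts [zero_le_one, cutoff_nonneg _ _]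
  have hg1 : ∀ i x, g i x ≤ 1 := fun i x => by
    simp only [g]
    split_ifs
    exacts [le_rfl, cutoff_le_one _ _]
  have hgLip : ∀ i, IsBLip (g i) := fun i => by
    refine ⟨?_, 1, fun x => abs_le.2 ⟨by linarith [hg0 i x], hg1 i x⟩⟩
    simp only [g]
    split_ifs
    exacts [⟨0, LipschitzWith.const 1⟩, ⟨_, lipschitzWith_cutoff _⟩]
  have hganti : ∀ i, Antitone (g i) := fun i => by
    simp only [g]
    split_ifs
    exacts [antitone_const, antitone_cutoff (ht i)]
  have hgE : ∀ i, SL.cE (fun ω => g i (Y i ω)) ≤ ((1 - p i : ℝ) : EReal) := fun i => by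
    simp only [g, hp]
    split_ifs
    · simp [cE, SL.const_eq]
    · exact SL.cE_cutoff_le hid i (ht i)
  have hbound : ∀ m, 1 - SL.V U ≤ K * Real.exp (-∑ i ∈ Finset.range m, p i) := fun m => by
    have h1 : ((1 - SL.V U : ℝ) : EReal) ≤
        SL.cE (fun ω => ∏ i ∈ Finset.range m, g i (Y i ω)) := by
      refine SL.one_sub_V_le_cE (fun ω => Finset.prod_nonneg fun i _ => hg0 _ _) fun ω hω => ?_
      refine (Finset.prod_eq_one fun i _ => le_antisymm (hg1 _ _) ?_).ge
      simp only [g]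
      split_ifs with hi
      · exact le_rfl
      · simp only [hU, Set.mem_iUnion, Set.mem_ofPred_eq, not_exists, not_le] at hω
        exact one_le_cutoff (ht i) (hω i (not_lt.1 hi))
    refine (EReal.coe_le_coe_iff.1 (h1.trans (hL m g hgLip hganti hg0))).trans ?_
    rw [← Finset.sum_neg_distrib, Real.exp_sum]
    refine mul_le_mul_of_nonneg_left (Finset.prod_le_prod (fun i _ => ?_) fun i _ => ?_)
      (by linarith)
    · exact EReal.toReal_nonneg (SL.cE_nonneg fun ω => hg0 _ _)
    · have h2 := EReal.toReal_le_toReal (hgE i) (ne_bot_of_le_ne_bot (by simp)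
        (SL.cE_nonneg fun ω => hg0 _ _)) (EReal.coe_ne_top _)
      rw [EReal.toReal_coe] at h2
      linarith [Real.add_one_le_exp (-p i)]
  have hlim : Tendsto (fun m => K * Real.exp (-∑ i ∈ Finset.range m, p i)) atTop
      (nhds (K * 0)) :=
    (Real.tendsto_exp_neg_atTop_nhds_zero.comp
      ((not_summable_iff_tendsto_nat_atTop_of_nonneg hp0).1 hpsum)).const_mul K
  have := ge_of_tendsto' hlim hbound
  linarith

lemma limsup_abs_sum_div_eq_top {x : ℕ → ℝ} (h : ∀ M : ℕ, ∃ᶠ i in atTop, (M + 1) * (i + 1) ≤ x i) :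
    limsup (fun n : ℕ => ((|∑ k ∈ Finset.range n, x k| / n : ℝ) : EReal)) atTop = ⊤ := by
  by_contra hne
  obtain ⟨c, hc, -⟩ := EReal.lt_iff_exists_real_btwn.1 (lt_top_iff_ne_top.2 hne)
  have hev := eventually_lt_of_limsup_lt hc
  obtain ⟨M, hM⟩ := exists_nat_ge (2 * c)
  obtain ⟨i, hi, h1, h2, hpos⟩ := ((h M).and_eventually
    (hev.and (((tendsto_add_atTop_nat 1).eventually hev).and (eventually_gt_atTop 0)))).exists
  rw [EReal.coe_lt_coe_iff] at h1 h2
  have hi0 : (0 : ℝ) < i := by exact_mod_cast hpos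
  rw [div_lt_iff₀ hi0] at h1
  rw [div_lt_iff₀ (by positivity), Finset.sum_range_succ] at h2
  push_cast at h2
  have h3 := abs_lt.1 h1
  have h4 := abs_lt.1 h2
  have hc0 : 0 < c := by
    by_contra hc0
    nlinarith [abs_nonneg (∑ k ∈ Finset.range i, x k)]
  nlinarith

lemma exists_summable_V_tail (SL : SublinearExp Ω) {Y : ℕ → Ω → ℝ} {K : ℝ} (hK : 1 ≤ K)
    (hid : IdentDist SL Y) (hL : LENDconj SL K Y) (hcont : SL.ContinuousCapacity)
    (h : SL.V {ω | limsup (fun n : ℕ =>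
        ((|∑ k ∈ Finset.range n, Y k ω| / n : ℝ) : EReal)) atTop = ⊤} < 1) :
    ∃ M : ℝ, 0 < M ∧ Summable fun i : ℕ => SL.V {ω | M * (i + 1) ≤ Y 0 ω} := by
  by_contra! hns
  have hone : ∀ M n : ℕ, SL.V (⋃ i ≥ n, {ω | ((M : ℝ) + 1) * (i + 1) ≤ Y i ω}) = 1 := fun M n =>
    SL.V_iUnion_tail_eq_one hK hid hL (t := fun i => ((M : ℝ) + 1) * (i + 1))
      (fun i => by positivity)
      (by simpa only [mul_assoc] using hns (2 * ((M : ℝ) + 1)) (by positivity)) n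
  have hlimsup : ∀ M : ℕ,
      SL.V (⋂ n : ℕ, ⋃ i ≥ n, {ω | ((M : ℝ) + 1) * (i + 1) ≤ Y i ω}) = 1 := fun M => by
    refine tendsto_nhds_unique (hcont.2 _ fun n m hnm =>
      Set.biUnion_subset_biUnion_left fun i hi => le_trans hnm hi) ?_
    simp only [hone]
    exact tendsto_const_nhds
  have hinter : SL.V (⋂ M : ℕ, ⋂ n : ℕ, ⋃ i ≥ n, {ω | ((M : ℝ) + 1) * (i + 1) ≤ Y i ω}) = 1 := by
    refine tendsto_nhds_unique (hcont.2 _ fun M M' hM => Set.iInter_mono fun n =>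
      Set.iUnion₂_mono fun i _ ω hω => ?_) ?_
    · rw [Set.mem_ofPred_eq] at hω ⊢
      exact le_trans (by gcongr) hω
    · simp only [hlimsup]
      exact tendsto_const_nhds
  refine absurd h (not_lt.2 (hinter.ge.trans (SL.V_mono fun ω hω => ?_)))
  refine limsup_abs_sum_div_eq_top fun M => frequently_atTop.2 fun n => ?_
  simpa using Set.mem_iInter.1 (Set.mem_iInter.1 hω M) n

lemma IdentDist.neg {SL : SublinearExp Ω} {X : ℕ → Ω → ℝ} (h : IdentDist SL X) :
    IdentDist SL (fun i ω => - X i ω) := by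
  rintro i φ ⟨C, m, hφ⟩
  refine h i (fun x => φ (-x)) ⟨C, m, fun x y => ?_⟩
  simpa [neg_add_eq_sub, abs_sub_comm] using hφ (-x) (-y)

lemma UENDconj.neg {SL : SublinearExp Ω} {K : ℝ} {X : ℕ → Ω → ℝ} (h : UENDconj SL K X) :
    LENDconj SL K (fun i ω => - X i ω) := by
  intro n g hg hanti h0
  refine h n (fun i x => g i (-x)) (fun i => ?_) (fun i x y hxy => hanti i (neg_le_neg hxy))
    fun i x => h0 i _
  obtain ⟨⟨L, hL⟩, M, hM⟩ := hg i
  refine ⟨⟨L, LipschitzWith.of_dist_le_mul fun x y => ?_⟩, M, fun x => hM _⟩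
  simpa [dist_neg_neg] using hL.dist_le_mul (-x) (-y)

lemma Choquet_ne_top_of_summable (SL : SublinearExp Ω) {Z : Ω → ℝ} {M : ℝ} (hM : 0 < M)
    (hsum : Summable fun i : ℕ => SL.V {ω | M * (i + 1) ≤ Z ω}) : SL.Choquet Z ≠ ⊤ := by
  have hsum' : Summable fun i : ℕ => SL.V {ω | M * i ≤ Z ω} := by
    rw [← summable_nat_add_iff 1]
    simpa using hsum
  have hcover : Set.Ioi (0 : ℝ) ⊆ ⋃ i : ℕ, Set.Ico (M * i) (M * (i + 1)) := fun t ht => by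
    refine Set.mem_iUnion.2 ⟨⌊t / M⌋₊, ?_, ?_⟩
    · rw [← le_div_iff₀' hM]
      exact Nat.floor_le (div_pos ht hM).le
    · rw [← div_lt_iff₀' hM]
      exact Nat.lt_floor_add_one _
  refine ne_top_of_le_ne_top (b := ∑' i : ℕ, ENNReal.ofReal (SL.V {ω | M * i ≤ Z ω}) *
    ENNReal.ofReal M) ?_ ?_
  · rw [ENNReal.tsum_mul_right]
    exact ENNReal.mul_ne_top hsum'.tsum_ofReal_ne_top ENNReal.ofReal_ne_top
  · refine (lintegral_mono_set hcover).trans ((lintegral_iUnion_le _ _).trans ?_)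
    refine ENNReal.tsum_le_tsum fun i => ?_
    calc _ ≤ ∫⁻ _ in Set.Ico (M * i) (M * (i + 1)), ENNReal.ofReal (SL.V {ω | M * i ≤ Z ω}) :=
          setLIntegral_mono measurable_const fun t ht =>
            ENNReal.ofReal_le_ofReal (SL.V_mono fun ω hω => ht.1.trans hω)
      _ = _ := by
          rw [setLIntegral_const, Real.volume_Ico]
          congr 2
          ring

end SublinearExp

/-- Theorem 4.5: converse strong law of large numbers for random variables that
are extended negatively dependent under the conjugate expectation `ℰ`. -/
theorem stmt12 {Ω : Type} (SL : SublinearExp Ω) (X : ℕ → Ω → ℝ)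
    (K : ℝ) (hK : 1 ≤ K)
    (hid : SublinearExp.IdentDist SL X)
    (hENDconj : SublinearExp.ENDconj SL K X)
    (hcont : SL.ContinuousCapacity)
    (h : SL.V {ω | limsup (fun n : ℕ =>
        ((|∑ k ∈ Finset.range n, X k ω| / n : ℝ) : EReal)) atTop = ⊤} < 1) :
    SL.Choquet (fun ω => |X 0 ω|) ≠ ⊤ := by
  obtain ⟨M₁, hM₁, hs₁⟩ := SL.exists_summable_V_tail hK hid hENDconj.2 hcont h
  obtain ⟨M₂, hM₂, hs₂⟩ := SL.exists_summable_V_tail hK hid.neg hENDconj.1.neg hcont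
    (by simpa using h)
  refine SL.Choquet_ne_top_of_summable (M := max M₁ M₂) (lt_max_of_lt_left hM₁)
    (Summable.of_nonneg_of_le (fun i => SL.V_nonneg _) (fun i => ?_) (hs₁.add hs₂))
  refine (SL.V_mono fun ω hω => ?_).trans (SL.V_union_le _ _)
  rcases le_abs.1 (Set.mem_ofPred_eq ▸ hω) with hpos | hneg
  · exact Or.inl (le_trans (by gcongr; exact le_max_left _ _) hpos)
  · exact Or.inr (le_trans (by gcongr; exact le_max_right _ _) hneg)
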